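/- Let n be a natural number and let (X, ≺, ⋆) be a well-founded accessible pointed graph such that X/x is extensional whenever the node x admits a path of length exactly n to the root. Then there exist a well-founded extensional accessible pointed graph (X̄, ≺, ⋆̄) (on a type in the same universe) and a surjective simulation q : X → X̄ with q ⋆ = ⋆̄. -/

import Mathlib

universe u v

/-- A relation is (inductively) well-founded if every inductive subset is the whole type:
`S` is inductive when `x ∈ S` whenever every child of `x` is in `S`. -/
def IsWFRel {X : Type u} (r : X → X → Prop) : Prop :=
  ∀ S : Set X, (∀ x, (∀ y, r y x → y ∈ S) → x ∈ S) → S = Set.univ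

/-- A relation is extensional if nodes with the same children are equal. -/
def IsExtRel {X : Type u} (r : X → X → Prop) : Prop :=
  ∀ x y, (∀ z, r z x ↔ r z y) → x = y

/-- `Below r x` is the full subgraph `X/x` of nodes admitting a (possibly empty) path to `x`. -/
def Below {X : Type u} (r : X → X → Prop) (x : X) : Type u :=
  {z : X // Relation.ReflTransGen r z x}

/-- The induced relation on the subgraph `X/x`. -/
def belowRel {X : Type u} (r : X → X → Prop) (x : X) :
    Below r x → Below r x → Prop :=
  fun a b => r a.1 b.1

/-- The root of the pointed subgraph `X/x`. -/
def belowRoot {X : Type u} (r : X → X → Prop) (x : X) : Below r x :=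
  ⟨x, Relation.ReflTransGen.refl⟩

/-- Isomorphism of pointed graphs: a relation-preserving-and-reflecting bijection
taking the first distinguished point to the second. -/
def PIso {X : Type u} {Y : Type v} (rX : X → X → Prop) (rY : Y → Y → Prop)
    (x : X) (y : Y) : Prop :=
  ∃ f : X ≃ Y, (∀ a b, rX a b ↔ rY (f a) (f b)) ∧ f x = y

/-- A simulation of graphs. -/
def IsSimulation {X : Type u} {Y : Type v} (rX : X → X → Prop)
    (rY : Y → Y → Prop) (f : X → Y) : Prop :=
  (∀ a b, rX a b → rY (f a) (f b)) ∧
  (∀ x y, rY y (f x) → ∃ a, rX a x ∧ f a = y)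

/-- A bisimulation between graphs. -/
def IsBisimulation {X : Type u} {Y : Type v} (rX : X → X → Prop)
    (rY : Y → Y → Prop) (R : X → Y → Prop) : Prop :=
  ∀ x y, R x y →
    (∀ x', rX x' x → ∃ y', rY y' y ∧ R x' y') ∧
    (∀ y', rY y' y → ∃ x', rX x' x ∧ R x' y')

/-- A bi-entire relation. -/
def BiEntire {X : Type u} {Y : Type v} (R : X → Y → Prop) : Prop :=
  (∀ x, ∃ y, R x y) ∧ (∀ y, ∃ x, R x y)

/-- A path of length exactly `n` from `x` to `star`: `x = x_n ≺ x_{n-1} ≺ ⋯ ≺ x_0 = star`. -/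
def PathLen {X : Type u} (r : X → X → Prop) (n : ℕ) (x star : X) : Prop :=
  ∃ p : ℕ → X, p n = x ∧ p 0 = star ∧ ∀ i < n, r (p (i + 1)) (p i)

/-!
Identify nodes that are related by some bisimulation. Bisimilarity is itself a bisimulation, so the
quotient map is a simulation; and a bisimulation on the quotient pulls back along it to one on the
original graph, so distinct nodes of the quotient are never bisimilar. In any graph "having the same
children" is a bisimulation, whence the quotient is extensional.
-/

section Graphs

variable {X Y Z W : Type*} {rX : X → X → Prop} {rY : Y → Y → Prop} {rZ : Z → Z → Prop}
  {rW : W → W → Prop}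

namespace IsSimulation

variable {f : X → Y}

theorem isWFRel_of_surjective (hf : IsSimulation rX rY f) (hsurj : Function.Surjective f)
    (hwf : IsWFRel rX) : IsWFRel rY := by
  intro S hS
  have preimage_eq_univ : f ⁻¹' S = Set.univ := by
    refine hwf _ fun x hx => hS _ fun y hy => ?_
    obtain ⟨x', hx', rfl⟩ := hf.2 x y hy
    exact hx x' hx'
  exact hsurj.preimage_injective preimage_eq_univ

theorem reflTransGen_root_of_surjective (hf : IsSimulation rX rY f)
    (hsurj : Function.Surjective f) {root : X} (hacc : ∀ x, Relation.ReflTransGen rX x root)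
    (y : Y) : Relation.ReflTransGen rY y (f root) := by
  obtain ⟨x, rfl⟩ := hsurj y
  exact (hacc x).lift f hf.1

end IsSimulation

namespace IsBisimulation

theorem eq (r : X → X → Prop) : IsBisimulation r r Eq := by
  rintro x _ rfl
  exact ⟨fun z hz => ⟨z, hz, rfl⟩, fun z hz => ⟨z, hz, rfl⟩⟩

theorem same_children (r : X → X → Prop) :
    IsBisimulation r r fun x y => ∀ z, r z x ↔ r z y := fun _ _ h =>
  ⟨fun z hz => ⟨z, (h z).1 hz, fun _ => Iff.rfl⟩, fun z hz => ⟨z, (h z).2 hz, fun _ => Iff.rfl⟩⟩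

theorem flip {R : X → Y → Prop} (hR : IsBisimulation rX rY R) :
    IsBisimulation rY rX (flip R) := fun y x h =>
  (hR x y h).symm

theorem comp {R : X → Y → Prop} {S : Y → Z → Prop} (hR : IsBisimulation rX rY R)
    (hS : IsBisimulation rY rZ S) : IsBisimulation rX rZ (Relation.Comp R S) := by
  rintro x z ⟨y, hxy, hyz⟩
  constructor
  · intro x' hx'
    obtain ⟨y', hy', hxy'⟩ := (hR x y hxy).1 x' hx'
    obtain ⟨z', hz', hyz'⟩ := (hS y z hyz).1 y' hy'
    exact ⟨z', hz', y', hxy', hyz'⟩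
  · intro z' hz'
    obtain ⟨y', hy', hyz'⟩ := (hS y z hyz).2 z' hz'
    obtain ⟨x', hx', hxy'⟩ := (hR x y hxy).2 y' hy'
    exact ⟨x', hx', y', hxy', hyz'⟩

theorem comap {R : Z → W → Prop} {f : X → Z} {g : Y → W} (hR : IsBisimulation rZ rW R)
    (hf : IsSimulation rX rZ f) (hg : IsSimulation rY rW g) :
    IsBisimulation rX rY fun x y => R (f x) (g y) := by
  intro x y h
  constructor
  · intro x' hx'
    obtain ⟨_, hw, hxw⟩ := (hR _ _ h).1 _ (hf.1 _ _ hx')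
    obtain ⟨y', hy', rfl⟩ := hg.2 _ _ hw
    exact ⟨y', hy', hxw⟩
  · intro y' hy'
    obtain ⟨_, hz, hzy⟩ := (hR _ _ h).2 _ (hg.1 _ _ hy')
    obtain ⟨x', hx', rfl⟩ := hf.2 _ _ hz
    exact ⟨x', hx', hzy⟩

end IsBisimulation

/-- Bisimilarity of a node of one graph with a node of another: some bisimulation relates them.
The extensional quotient of a graph identifies its bisimilar nodes. -/
def Bisimilar (rX : X → X → Prop) (rY : Y → Y → Prop) (x : X) (y : Y) : Prop :=
  ∃ R : X → Y → Prop, IsBisimulation rX rY R ∧ R x y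

namespace Bisimilar

theorem refl (r : X → X → Prop) (x : X) : Bisimilar r r x x :=
  ⟨Eq, .eq r, rfl⟩

theorem symm {x : X} {y : Y} : Bisimilar rX rY x y → Bisimilar rY rX y x
  | ⟨R, hR, hxy⟩ => ⟨flip R, hR.flip, hxy⟩

theorem trans {x : X} {y : Y} {z : Z} :
    Bisimilar rX rY x y → Bisimilar rY rZ y z → Bisimilar rX rZ x z
  | ⟨R, hR, hxy⟩, ⟨S, hS, hyz⟩ => ⟨Relation.Comp R S, hR.comp hS, y, hxy, hyz⟩

theorem of_map {f : X → Z} {g : Y → W} (hf : IsSimulation rX rZ f) (hg : IsSimulation rY rW g)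
    {x : X} {y : Y} : Bisimilar rZ rW (f x) (g y) → Bisimilar rX rY x y
  | ⟨_, hR, hxy⟩ => ⟨_, hR.comap hf hg, hxy⟩

theorem exists_child {x x' : X} {y : Y} (h : Bisimilar rX rY x y) (hx' : rX x' x) :
    ∃ y', rY y' y ∧ Bisimilar rX rY x' y' := by
  obtain ⟨R, hR, hxy⟩ := h
  obtain ⟨y', hy', hxy'⟩ := (hR x y hxy).1 x' hx'
  exact ⟨y', hy', R, hR, hxy'⟩

end Bisimilar

theorem isExtRel_of_bisimilar_imp_eq {r : X → X → Prop}
    (h : ∀ x y, Bisimilar r r x y → x = y) : IsExtRel r := fun x y hxy =>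
  h x y ⟨_, .same_children r, hxy⟩

end Graphs

section BisimQuotient

variable {X : Type*} (r : X → X → Prop)

/-- Bisimilarity of the nodes of one graph, as a setoid. -/
def bisimSetoid : Setoid X :=
  ⟨Bisimilar r r, .refl r, .symm, .trans⟩

/-- The bisimilarity classes of the nodes of a graph: the nodes of its extensional quotient. -/
abbrev BisimQuotient : Type _ :=
  Quotient (bisimSetoid r)

namespace BisimQuotient

/-- The quotient map sending a node to its bisimilarity class. -/
def mk : X → BisimQuotient r :=
  Quotient.mk (bisimSetoid r)

/-- The graph relation on bisimilarity classes: one class is a child of another when this holds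
for some choice of representatives. -/
def rel : BisimQuotient r → BisimQuotient r → Prop :=
  Relation.Map r (mk r) (mk r)

theorem mk_surjective : Function.Surjective (mk r) :=
  Quotient.mk_surjective

theorem mk_eq_mk {x y : X} : mk r x = mk r y ↔ Bisimilar r r x y :=
  Quotient.eq

theorem isSimulation_mk : IsSimulation r (rel r) (mk r) := by
  refine ⟨fun x y h => ⟨x, y, h, rfl, rfl⟩, ?_⟩
  rintro x _ ⟨y', y, hy', rfl, hyx⟩
  obtain ⟨x', hx', hyx'⟩ := ((mk_eq_mk r).1 hyx).exists_child hy'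
  exact ⟨x', hx', (mk_eq_mk r).2 hyx'.symm⟩

theorem eq_of_bisimilar (a b : BisimQuotient r) (h : Bisimilar (rel r) (rel r) a b) : a = b := by
  obtain ⟨x, rfl⟩ := mk_surjective r a
  obtain ⟨y, rfl⟩ := mk_surjective r b
  exact (mk_eq_mk r).2 (h.of_map (isSimulation_mk r) (isSimulation_mk r))

theorem isExtRel_rel : IsExtRel (rel r) :=
  isExtRel_of_bisimilar_imp_eq (eq_of_bisimilar r)

end BisimQuotient

end BisimQuotient

theorem extensional_quotient_general {X : Type u} (r : X → X → Prop) :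
    ∃ (Y : Type u) (rY : Y → Y → Prop) (q : X → Y),
      IsExtRel rY ∧ IsSimulation r rY q ∧ Function.Surjective q :=
  ⟨BisimQuotient r, BisimQuotient.rel r, BisimQuotient.mk r, BisimQuotient.isExtRel_rel r,
    BisimQuotient.isSimulation_mk r, BisimQuotient.mk_surjective r⟩

/-- Extensional quotients: if `(X, r, star)` is a well-founded accessible pointed graph
and `X/x` is extensional for every node `x` admitting a path of length `n` to the root,
then `X` has an extensional quotient: a well-founded extensional accessible pointed
graph together with a surjective root-preserving simulation from `X`. -/
theorem extensional_quotient {X : Type u} (r : X → X → Prop) (star : X) (n : ℕ)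
    (hwf : IsWFRel r) (hacc : ∀ x, Relation.ReflTransGen r x star)
    (hext : ∀ x, PathLen r n x star → IsExtRel (belowRel r x)) :
    ∃ (Y : Type u) (rY : Y → Y → Prop) (rootY : Y) (q : X → Y),
      IsWFRel rY ∧ IsExtRel rY ∧ (∀ z, Relation.ReflTransGen rY z rootY) ∧
      IsSimulation r rY q ∧ Function.Surjective q ∧ q star = rootY := by
  obtain ⟨Y, rY, q, hextY, hq, hsurj⟩ := extensional_quotient_general r
  exact ⟨Y, rY, q star, q, hq.isWFRel_of_surjective hsurj hwf, hextY,
    hq.reflTransGen_root_of_surjective hsurj hacc, hq, hsurj, rfl⟩
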